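/- Let n be a positive natural number and let S, F, φ be n × n real matrices, regarded with the Frobenius inner product. Let c be a real number, let b' be a real number with b' > 1/4, and set k := 4b' − 1. If ‖S − (1/k)·φ‖ ≥ (2·√b' / k)·‖φ‖, then (1/2)·‖S + F + φ + (c/2)·I‖² − (1/2)·‖φ‖² − ⟪S, φ⟫ + (2b' − 1/2)·‖S‖² ≥ 0. -/

import Mathlib

open scoped Matrix

attribute [local instance] Matrix.frobeniusNormedAddCommGroup

theorem frob_sq_aux {n : ℕ} (A : Matrix (Fin n) (Fin n) ℝ) :
    ‖A‖ ^ 2 = ∑ i, ∑ j, A i j ^ 2 := by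
  rw [Matrix.frobenius_norm_def, ← Real.sqrt_eq_rpow, Real.sq_sqrt]
  · simp
  · positivity

theorem frob_sub_aux {n : ℕ} (S φ : Matrix (Fin n) (Fin n) ℝ) (t : ℝ) :
    ‖S - t • φ‖ ^ 2 = ‖S‖ ^ 2 - 2 * t * (Sᵀ * φ).trace + t ^ 2 * ‖φ‖ ^ 2 := by
  have e : (Sᵀ * φ).trace = ∑ i, ∑ j, S i j * φ i j := by
    simp only [Matrix.trace, Matrix.diag, Matrix.mul_apply, Matrix.transpose_apply]
    exact Finset.sum_comm
  rw [frob_sq_aux, frob_sq_aux, frob_sq_aux, e]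
  simp only [Finset.mul_sum, ← Finset.sum_sub_distrib, ← Finset.sum_add_distrib]
  refine Finset.sum_congr rfl fun i _ => Finset.sum_congr rfl fun j _ => ?_
  simp only [Matrix.sub_apply, Matrix.smul_apply, smul_eq_mul]
  ring

/-- Pointwise form of the combination of terms in the evolution formula for
`λ_{a'}^{b'}` whose nonnegativity yields that `λ_{a'}^{b'}(t) + n(a+c)²t/8` is
nondecreasing along the extended Ricci flow.  Here `(Sᵀ * φ).trace` is the
Frobenius inner product `⟪S, φ⟫` of real matrices. -/
theorem evolution_terms_nonneg (n : ℕ) (hn : 0 < n)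
    (S F φ : Matrix (Fin n) (Fin n) ℝ) (c : ℝ)
    (b' : ℝ) (hb : 1 / 4 < b') (k : ℝ) (hk : k = 4 * b' - 1)
    (h : ‖S - (1 / k) • φ‖ ≥ (2 * Real.sqrt b' / k) * ‖φ‖) :
    0 ≤ (1 / 2) * ‖S + F + φ + (c / 2) • (1 : Matrix (Fin n) (Fin n) ℝ)‖ ^ 2
        - (1 / 2) * ‖φ‖ ^ 2 - (Sᵀ * φ).trace + (2 * b' - 1 / 2) * ‖S‖ ^ 2 := by
  have hk0 : 0 < k := by linarith
  have hb0 : 0 ≤ b' := by linarith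
  have h2 : (2 * Real.sqrt b' / k * ‖φ‖) ^ 2 ≤ ‖S - (1 / k) • φ‖ ^ 2 :=
    pow_le_pow_left₀ (by positivity) h 2
  rw [frob_sub_aux, mul_pow, div_pow, mul_pow, Real.sq_sqrt hb0] at h2
  have hb4 : b' = (k + 1) / 4 := by linarith
  have key : k / 2 * (‖S‖ ^ 2 - 2 * (1 / k) * (Sᵀ * φ).trace + (1 / k) ^ 2 * ‖φ‖ ^ 2
      - 2 ^ 2 * b' / k ^ 2 * ‖φ‖ ^ 2)
      = (2 * b' - 1 / 2) * ‖S‖ ^ 2 - (Sᵀ * φ).trace - (1 / 2) * ‖φ‖ ^ 2 := by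
    rw [hb4]
    field_simp
    ring
  have h3 := mul_nonneg (half_pos hk0).le (sub_nonneg.2 h2)
  rw [key] at h3
  have h4 := sq_nonneg ‖S + F + φ + (c / 2) • (1 : Matrix (Fin n) (Fin n) ℝ)‖
  linarith
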